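/- arXiv:1306.0323 — 4 statements merged into one kernel-verified Lean document; each statement's English description precedes it below -/
import Mathlib

section
/- Let λ ∈ ℂ with Im λ ≠ 0 and let (φ, u) be a solution of −(pφ')' + qφ = λwφ on [a,b] satisfying separated self-adjoint boundary conditions u(a) = l·φ(a), u(b) = r·φ(b) with l, r ∈ ℝ. Then ∫ₐᵇ w(t)|φ(t)|² dt = 0. -/
open MeasureTheory Real Complex

/-!
Write the equation as the first-order system `φ' = s u`, `u' = (q - λ w) φ` with `s = 1 / p`. Then
`(u φ̄)' = (q - λ w) |φ|² + s |u|²`, and since `s`, `q` and `w` are real, taking imaginary parts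
gives the Lagrange identity `(Im (u φ̄))' = -(Im λ) w |φ|²`. Self-adjoint boundary conditions make
the values of `Im (u φ̄)` at the two endpoints equal, so `Im λ ∫ w |φ|² = 0`.

The product rule holds because products of absolutely continuous functions are absolutely
continuous, and such functions are the integrals of their almost everywhere derivatives.
-/

open Set
open scoped ComplexConjugate

section AbsolutelyContinuous

variable {a b : ℝ}

theorem absolutelyContinuousOnInterval_of_dist_le {X Y : Type*} [PseudoMetricSpace X]
    [PseudoMetricSpace Y] {f : ℝ → X} {g : ℝ → Y} (hg : AbsolutelyContinuousOnInterval g a b)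
    (hfg : ∀ x ∈ uIcc a b, ∀ y ∈ uIcc a b, dist (f x) (f y) ≤ dist (g x) (g y)) :
    AbsolutelyContinuousOnInterval f a b := by
  rw [absolutelyContinuousOnInterval_iff] at hg ⊢
  intro ε hε
  obtain ⟨δ, hδ, hgδ⟩ := hg ε hε
  refine ⟨δ, hδ, fun I hI hIδ => lt_of_le_of_lt (Finset.sum_le_sum fun i hi => ?_) (hgδ I hI hIδ)⟩
  obtain ⟨hleft, hright⟩ := hI.1 i hi
  exact hfg _ hleft _ hright

theorem absolutelyContinuousOnInterval_congr {X : Type*} [PseudoMetricSpace X] {f g : ℝ → X}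
    (hg : AbsolutelyContinuousOnInterval g a b) (hfg : EqOn f g (uIcc a b)) :
    AbsolutelyContinuousOnInterval f a b :=
  absolutelyContinuousOnInterval_of_dist_le hg fun x hx y hy => by rw [hfg hx, hfg hy]

theorem absolutelyContinuousOnInterval_const {X : Type*} [PseudoMetricSpace X] (c : X) :
    AbsolutelyContinuousOnInterval (fun _ => c) a b :=
  (LipschitzWith.const c).lipschitzOnWith.absolutelyContinuousOnInterval

theorem absolutelyContinuousOnInterval_intervalIntegral {E : Type*} [NormedAddCommGroup E]
    [NormedSpace ℝ E] {f : ℝ → E} {c : ℝ}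
    (hf : IntervalIntegrable f volume a b) (hc : c ∈ uIcc a b) :
    AbsolutelyContinuousOnInterval (fun x => ∫ t in c..x, f t) a b := by
  have integrable_from : ∀ x ∈ uIcc a b, IntervalIntegrable f volume c x := fun x hx =>
    hf.mono_set (uIcc_subset_uIcc hc hx)
  refine absolutelyContinuousOnInterval_of_dist_le
    (hf.norm.absolutelyContinuousOnInterval_intervalIntegral hc) fun x hx y hy => ?_
  rw [dist_eq_norm, Real.dist_eq,
    intervalIntegral.integral_interval_sub_left (integrable_from x hx) (integrable_from y hy),
    intervalIntegral.integral_interval_sub_left (integrable_from x hx).norm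
      (integrable_from y hy).norm]
  exact intervalIntegral.norm_integral_le_abs_integral_norm

end AbsolutelyContinuous

theorem intervalIntegrable_clm_comp {E F : Type*} [NormedAddCommGroup E] [NormedSpace ℝ E]
    [NormedAddCommGroup F] [NormedSpace ℝ F] {μ : Measure ℝ} {a b : ℝ} {f : ℝ → E}
    (hf : IntervalIntegrable f μ a b) (L : E →L[ℝ] F) :
    IntervalIntegrable (fun x => L (f x)) μ a b :=
  ⟨L.integrable_comp hf.1, L.integrable_comp hf.2⟩

/-- `f` is a Lebesgue primitive of `f'` on the interval with endpoints `a` and `b`: `f'` is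
integrable there and `f` is, up to a constant, its indefinite integral. When the target is complete,
this says that `f` is absolutely continuous with integrable almost everywhere derivative `f'`. -/
structure IsLebesguePrimitive {E : Type*} [NormedAddCommGroup E] [NormedSpace ℝ E]
    (f f' : ℝ → E) (a b : ℝ) : Prop where
  intervalIntegrable : IntervalIntegrable f' volume a b
  eq_add_integral : ∀ x ∈ uIcc a b, f x = f a + ∫ t in a..x, f' t

namespace IsLebesguePrimitive

variable {E : Type*} [NormedAddCommGroup E] [NormedSpace ℝ E] {a b : ℝ} {f f' : ℝ → E}

theorem integral_eq_sub (hf : IsLebesguePrimitive f f' a b) :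
    ∫ t in a..b, f' t = f b - f a :=
  eq_sub_of_add_eq' (hf.eq_add_integral b right_mem_uIcc).symm

theorem absolutelyContinuousOnInterval (hf : IsLebesguePrimitive f f' a b) :
    AbsolutelyContinuousOnInterval f a b :=
  absolutelyContinuousOnInterval_congr
    ((absolutelyContinuousOnInterval_const (f a)).add
      (absolutelyContinuousOnInterval_intervalIntegral hf.intervalIntegrable left_mem_uIcc))
    hf.eq_add_integral

theorem ae_hasDerivAt [CompleteSpace E] (hf : IsLebesguePrimitive f f' a b) :
    ∀ᵐ x, x ∈ uIcc a b → HasDerivAt f (f' x) x := by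
  filter_upwards [hf.intervalIntegrable.ae_hasDerivAt_integral, Measure.ae_ne volume a,
    Measure.ae_ne volume b] with x hderiv hxa hxb hx
  have hnhds : uIcc a b ∈ nhds x := Icc_mem_nhds (by grind [uIcc]) (by grind [uIcc])
  exact ((hderiv hx a left_mem_uIcc).const_add (f a)).congr_of_eventuallyEq
    (Filter.eventually_of_mem hnhds hf.eq_add_integral)

theorem of_ae_hasDerivAt [CompleteSpace E] (hac : AbsolutelyContinuousOnInterval f a b)
    (hint : IntervalIntegrable f' volume a b)
    (hderiv : ∀ᵐ x, x ∈ uIcc a b → HasDerivAt f (f' x) x) : IsLebesguePrimitive f f' a b := by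
  refine ⟨hint, fun x hx => ?_⟩
  let remainder : ℝ → E := fun y => f y - ∫ t in a..y, f' t
  have remainder_ac : AbsolutelyContinuousOnInterval remainder a b :=
    hac.sub (absolutelyContinuousOnInterval_intervalIntegral hint left_mem_uIcc)
  have remainder_deriv : ∀ᵐ y, y ∈ uIcc a b → HasDerivAt remainder 0 y := by
    filter_upwards [hderiv, hint.ae_hasDerivAt_integral] with y hf hintegral hy
    simpa only [sub_self] using (hf hy).fun_sub (hintegral hy a left_mem_uIcc)
  obtain ⟨c, hc⟩ := remainder_ac.const_of_ae_hasDerivAt_zero remainder_deriv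
  have hconst : f x - ∫ t in a..x, f' t = f a - ∫ t in a..a, f' t :=
    (hc x hx).trans (hc a left_mem_uIcc).symm
  rwa [intervalIntegral.integral_same, sub_zero, sub_eq_iff_eq_add] at hconst

theorem mul {A : Type*} [NormedDivisionRing A] [NormedAlgebra ℝ A] [CompleteSpace A]
    {f f' g g' : ℝ → A} (hf : IsLebesguePrimitive f f' a b) (hg : IsLebesguePrimitive g g' a b) :
    IsLebesguePrimitive (fun x => f x * g x) (fun x => f' x * g x + f x * g' x) a b := by
  have hfac := hf.absolutelyContinuousOnInterval
  have hgac := hg.absolutelyContinuousOnInterval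
  refine of_ae_hasDerivAt (hfac.smul hgac)
    ((hf.intervalIntegrable.mul_continuousOn hgac.continuousOn).add
      (hg.intervalIntegrable.continuousOn_mul hfac.continuousOn)) ?_
  filter_upwards [hf.ae_hasDerivAt, hg.ae_hasDerivAt] with x hfx hgx hx
  exact (hfx hx).mul (hgx hx)

theorem clm_comp {F : Type*} [NormedAddCommGroup F] [NormedSpace ℝ F] [CompleteSpace E]
    [CompleteSpace F] (hf : IsLebesguePrimitive f f' a b) (L : E →L[ℝ] F) :
    IsLebesguePrimitive (fun x => L (f x)) (fun x => L (f' x)) a b := by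
  refine ⟨intervalIntegrable_clm_comp hf.intervalIntegrable L, fun x hx => ?_⟩
  have hint : IntervalIntegrable f' volume a x :=
    hf.intervalIntegrable.mono_set (uIcc_subset_uIcc_left hx)
  rw [L.intervalIntegral_comp_comm hint, ← map_add, ← hf.eq_add_integral x hx]

end IsLebesguePrimitive

/-- `(φ, u)` solves the first-order form `φ' = s u`, `u' = (q - λ w) φ` of the Sturm–Liouville
equation `-(p φ')' + q φ = λ w φ` on the interval with endpoints `a` and `b`; `u` is the
quasi-derivative `p φ'`. The leading coefficient enters only through its reciprocal `s = 1 / p`, so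
that no division occurs and `s` may vanish. -/
structure IsSturmLiouvilleSolution (s q w : ℝ → ℝ) (lam : ℂ) (φ u : ℝ → ℂ) (a b : ℝ) :
    Prop where
  isLebesguePrimitive : IsLebesguePrimitive φ (fun t => s t * u t) a b
  isLebesguePrimitive_quasiDeriv : IsLebesguePrimitive u (fun t => (q t - lam * w t) * φ t) a b

theorem im_lagrange_integrand (s q w : ℝ) (lam z v : ℂ) :
    ((q - lam * w) * z * conj z + v * conj (s * v)).im = -lam.im * (w * ‖z‖ ^ 2) := by
  have hreal : (q - lam * w) * z * conj z + v * conj (s * v) =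
      ((q * ‖z‖ ^ 2 + s * ‖v‖ ^ 2 : ℝ) : ℂ) - lam * ((w * ‖z‖ ^ 2 : ℝ) : ℂ) := by
    rw [map_mul, conj_ofReal]
    push_cast
    rw [← mul_conj', ← mul_conj']
    ring
  rw [hreal, sub_im, ofReal_im, im_mul_ofReal, zero_sub, neg_mul]

namespace IsSturmLiouvilleSolution

variable {s q w : ℝ → ℝ} {lam : ℂ} {φ u : ℝ → ℂ} {a b : ℝ}

theorem of_continuousOn (hs : IntervalIntegrable s volume a b)
    (hq : IntervalIntegrable q volume a b) (hw : IntervalIntegrable w volume a b)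
    (hφc : ContinuousOn φ (uIcc a b)) (huc : ContinuousOn u (uIcc a b))
    (hφ : ∀ x ∈ uIcc a b, φ x = φ a + ∫ t in a..x, s t * u t)
    (hu : ∀ x ∈ uIcc a b, u x = u a + ∫ t in a..x, (q t - lam * w t) * φ t) :
    IsSturmLiouvilleSolution s q w lam φ u a b where
  isLebesguePrimitive := ⟨(intervalIntegrable_clm_comp hs ofRealCLM).mul_continuousOn huc, hφ⟩
  isLebesguePrimitive_quasiDeriv :=
    ⟨((intervalIntegrable_clm_comp hq ofRealCLM).sub
      ((intervalIntegrable_clm_comp hw ofRealCLM).const_mul lam)).mul_continuousOn hφc, hu⟩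

theorem isLebesguePrimitive_im_mul_conj (h : IsSturmLiouvilleSolution s q w lam φ u a b) :
    IsLebesguePrimitive (fun x => (u x * conj (φ x)).im)
      (fun x => -lam.im * (w x * ‖φ x‖ ^ 2)) a b := by
  have hconj : IsLebesguePrimitive (fun x => conj (φ x)) (fun x => conj (s x * u x)) a b :=
    h.isLebesguePrimitive.clm_comp (conjCLE : ℂ →L[ℝ] ℂ)
  have him := (h.isLebesguePrimitive_quasiDeriv.mul hconj).clm_comp imCLM
  simpa only [imCLM_apply, im_lagrange_integrand] using him

theorem lagrange_identity (h : IsSturmLiouvilleSolution s q w lam φ u a b) :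
    lam.im * ∫ t in a..b, w t * ‖φ t‖ ^ 2 =
      (u a * conj (φ a)).im - (u b * conj (φ b)).im := by
  have hint := h.isLebesguePrimitive_im_mul_conj.integral_eq_sub
  rw [intervalIntegral.integral_const_mul] at hint
  linarith

end IsSturmLiouvilleSolution

theorem im_mul_conj_eq_zero_of_eq_ofReal_mul {z v : ℂ} {c : ℝ} (h : v = c * z) :
    (v * conj z).im = 0 := by
  rw [h, mul_assoc, mul_conj, ← ofReal_mul, ofReal_im]

theorem sl_nonreal_weight_integral_zero_general {s q w : ℝ → ℝ} {lam : ℂ} {φ u : ℝ → ℂ}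
    {a b : ℝ} (h : IsSturmLiouvilleSolution s q w lam φ u a b) (hlam : lam.im ≠ 0)
    (hbc : (u a * conj (φ a)).im = (u b * conj (φ b)).im) :
    ∫ t in a..b, w t * ‖φ t‖ ^ 2 = 0 := by
  have him := h.lagrange_identity
  rw [hbc, sub_self] at him
  exact (mul_eq_zero.mp him).resolve_left hlam

/-- Identity (5.1) of the paper: if λ is non-real and (φ, u) is a solution of
−(pφ')' + qφ = λwφ satisfying separated self-adjoint boundary conditions,
then ∫ₐᵇ w|φ|² = 0. -/
theorem sl_nonreal_weight_integral_zero
    (a b : ℝ) (hab : a < b) (p q w : ℝ → ℝ)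
    (hpm : Measurable p) (hqm : Measurable q) (hwm : Measurable w)
    (hp_pos : ∀ᵐ x ∂(volume.restrict (Set.Ioc a b)), 0 < p x)
    (hp_int : IntegrableOn (fun x => 1 / p x) (Set.Ioc a b))
    (hq_int : IntegrableOn q (Set.Ioc a b))
    (hw_int : IntegrableOn w (Set.Ioc a b))
    (hw_ne : ∀ᵐ x ∂(volume.restrict (Set.Ioc a b)), w x ≠ 0)
    (lam : ℂ) (hlam : lam.im ≠ 0) (φ u : ℝ → ℂ)
    (hφc : ContinuousOn φ (Set.Icc a b)) (huc : ContinuousOn u (Set.Icc a b))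
    (hφ : ∀ x ∈ Set.Icc a b, φ x = φ a + ∫ t in a..x, u t / (p t : ℂ))
    (hu : ∀ x ∈ Set.Icc a b, u x = u a + ∫ t in a..x, ((q t : ℂ) - lam * (w t : ℂ)) * φ t)
    (l r : ℝ) (hbca : u a = (l : ℂ) * φ a) (hbcb : u b = (r : ℂ) * φ b) :
    ∫ t in a..b, w t * ‖φ t‖ ^ 2 = 0 := by
  simp only [← uIcc_of_le hab.le] at hφc huc hφ hu
  simp only [← intervalIntegrable_iff_integrableOn_Ioc_of_le hab.le] at hp_int hq_int hw_int
  have hφ_recip : ∀ x ∈ uIcc a b, φ x = φ a + ∫ t in a..x, ((1 / p t : ℝ) : ℂ) * u t := by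
    simpa only [ofReal_div, ofReal_one, one_div_mul_eq_div] using hφ
  refine sl_nonreal_weight_integral_zero_general
    (.of_continuousOn hp_int hq_int hw_int hφc huc hφ_recip hu) hlam ?_
  rw [im_mul_conj_eq_zero_of_eq_ofReal_mul hbca, im_mul_conj_eq_zero_of_eq_ofReal_mul hbcb]
end

section
/- Let φ, u : [a,b] → ℂ be continuous with φ(x) = φ(a) + ∫ₐˣ u(t)/p(t) dt for all x ∈ [a,b], and suppose ∫ₐᵇ |u|²/p < ∞ and ∫ₐᵇ |φ|²/p < ∞. Then ‖φ‖_∞² ≤ 2‖φ'‖_{p,2}·‖φ‖_{1/p,2} + ‖1/p‖_{L¹}⁻¹·‖φ‖_{1/p,2}², where ‖φ'‖_{p,2} := (∫ₐᵇ |u|²/p)^{1/2}, ‖φ‖_{1/p,2} := (∫ₐᵇ |φ|²/p)^{1/2}, and ‖φ‖_∞ := sup_{x∈[a,b]} |φ(x)|. -/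
open MeasureTheory Real Complex

/-!
Continuity makes `‖φ y‖ + ‖φ x‖` close to `2 ‖φ t‖` for `t` in a short interval `(x, y]`, so an
increment bound `‖φ y - φ x‖ ≤ ∫ w dμ` over `(x, y]` becomes, after adding up short intervals,
`|‖φ y‖² - ‖φ x‖²| ≤ 2 ∫ ‖φ‖ w dμ`. Let `y` be a point where `‖φ y‖²` is at most its `μ`-mean and
let `x` maximise `‖φ‖`; the Cauchy-Schwarz inequality bounds the difference of the squares. No
differentiation is involved, and the weight `1/p` enters only as the density of `μ`.
-/

section UpperGradient

open Set

variable {X E : Type*} [PseudoMetricSpace X] [SeminormedAddCommGroup E] {μ : Measure ℝ} {a b : ℝ}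

/-- `w` is an upper gradient of `f` on `[a, b]` with respect to `μ`: the increments of `f` are
bounded by the integrals of `w`. The intervals are half-open so that these integrals add up even
when `μ` has atoms. -/
def IsUpperGradientOn (μ : Measure ℝ) (f : ℝ → X) (w : ℝ → ℝ) (a b : ℝ) : Prop :=
  ∀ ⦃x y⦄, a ≤ x → x ≤ y → y ≤ b → dist (f x) (f y) ≤ ∫ t in Ioc x y, w t ∂μ

theorem setIntegral_Ioc_add_adjacent {F : Type*} [NormedAddCommGroup F] [NormedSpace ℝ F]
    {g : ℝ → F} {x y z : ℝ} (hxy : x ≤ y) (hyz : y ≤ z) (hg : IntegrableOn g (Ioc x z) μ) :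
    ∫ t in Ioc x y, g t ∂μ + ∫ t in Ioc y z, g t ∂μ = ∫ t in Ioc x z, g t ∂μ := by
  rw [← Ioc_union_Ioc_eq_Ioc hxy hyz] at hg ⊢
  exact (setIntegral_union (Ioc_disjoint_Ioc_of_le le_rfl) measurableSet_Ioc
    hg.left_of_union hg.right_of_union).symm

theorem abs_norm_sq_sub_norm_sq_le (x y : E) :
    |‖x‖ ^ 2 - ‖y‖ ^ 2| ≤ ‖x - y‖ * (‖x‖ + ‖y‖) := by
  rw [sq_sub_sq, abs_mul, abs_of_nonneg (by positivity : 0 ≤ ‖x‖ + ‖y‖), mul_comm]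
  gcongr
  exact abs_norm_sub_norm_le x y

namespace IsUpperGradientOn

variable {f : ℝ → X} {φ : ℝ → E} {w : ℝ → ℝ}

theorem of_dist_le_of_sub_le {δ : ℝ} (hδ : 0 < δ) (hw : IntegrableOn w (Ioc a b) μ)
    (h : ∀ ⦃x y⦄, a ≤ x → x ≤ y → y ≤ b → y - x ≤ δ → dist (f x) (f y) ≤ ∫ t in Ioc x y, w t ∂μ) :
    IsUpperGradientOn μ f w a b := by
  intro x y hax hxy hyb
  obtain ⟨n, hn⟩ : ∃ n : ℕ, y - x ≤ n * δ := by
    obtain ⟨n, hn⟩ := Archimedean.arch (y - x) hδ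
    exact ⟨n, by simpa only [nsmul_eq_mul] using hn⟩
  induction n generalizing y with
  | zero => exact h hax hxy hyb (by norm_num at hn; linarith)
  | succ n ih =>
    rcases le_or_gt (y - x) δ with hshort | hlong
    · exact h hax hxy hyb hshort
    · have hxz : x ≤ y - δ := by linarith
      have hzy : y - δ ≤ y := by linarith
      calc dist (f x) (f y) ≤ dist (f x) (f (y - δ)) + dist (f (y - δ)) (f y) :=
            dist_triangle _ _ _
        _ ≤ ∫ t in Ioc x (y - δ), w t ∂μ + ∫ t in Ioc (y - δ) y, w t ∂μ :=
            add_le_add (ih hxz (by linarith) (by push_cast at hn; linarith))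
              (h (by linarith) hzy hyb (by linarith))
        _ = ∫ t in Ioc x y, w t ∂μ :=
            setIntegral_Ioc_add_adjacent hxz hzy (hw.mono_set (Ioc_subset_Ioc hax hyb))

theorem dist_le_setIntegral (h : IsUpperGradientOn μ f w a b) (hw0 : ∀ t, 0 ≤ w t)
    (hw : IntegrableOn w (Ioc a b) μ) {x y : ℝ} (hx : x ∈ Icc a b) (hy : y ∈ Icc a b) :
    dist (f x) (f y) ≤ ∫ t in Ioc a b, w t ∂μ := by
  wlog hxy : x ≤ y generalizing x y
  · rw [dist_comm]
    exact this hy hx (le_of_not_ge hxy)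
  · exact (h hx.1 hxy hy.2).trans <| setIntegral_mono_set hw (ae_of_all _ hw0)
      (Ioc_subset_Ioc hx.1 hy.2).eventuallyLE

theorem norm_sq_add_const (h : IsUpperGradientOn μ φ w a b) (hφ : ContinuousOn φ (Icc a b))
    (hw0 : ∀ t, 0 ≤ w t) (hw : IntegrableOn w (Ioc a b) μ)
    (hφw : IntegrableOn (fun t ↦ ‖φ t‖ * w t) (Ioc a b) μ) {ε : ℝ} (hε : 0 < ε) :
    IsUpperGradientOn μ (fun t ↦ ‖φ t‖ ^ 2) (fun t ↦ 2 * (‖φ t‖ * w t) + 2 * ε * w t) a b := by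
  have hint : IntegrableOn (fun t ↦ 2 * (‖φ t‖ * w t) + 2 * ε * w t) (Ioc a b) μ :=
    (hφw.const_mul 2).add (hw.const_mul (2 * ε))
  obtain ⟨δ, hδ, hclose⟩ := Metric.uniformContinuousOn_iff_le.1
    (isCompact_Icc.uniformContinuousOn_of_continuous hφ.norm) ε hε
  refine of_dist_le_of_sub_le hδ hint fun x y hax hxy hyb hyx ↦ ?_
  have hsub : Ioc x y ⊆ Ioc a b := Ioc_subset_Ioc hax hyb
  have hnear : ∀ t ∈ Ioc x y, ‖φ x‖ + ‖φ y‖ ≤ 2 * ‖φ t‖ + 2 * ε := by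
    intro t ht
    have htab : t ∈ Icc a b := Ioc_subset_Icc_self (hsub ht)
    have hx := hclose x ⟨hax, hxy.trans hyb⟩ t htab
      (by rw [Real.dist_eq, abs_sub_comm, abs_of_pos (sub_pos.2 ht.1)]; linarith [ht.2])
    have hy := hclose y ⟨hax.trans hxy, hyb⟩ t htab
      (by rw [Real.dist_eq, abs_of_nonneg (sub_nonneg.2 ht.2)]; linarith [ht.1])
    rw [Real.dist_eq] at hx hy
    linarith [le_of_abs_le hx, le_of_abs_le hy]
  calc dist (‖φ x‖ ^ 2) (‖φ y‖ ^ 2) ≤ dist (φ x) (φ y) * (‖φ x‖ + ‖φ y‖) := by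
        rw [Real.dist_eq, dist_eq_norm]
        exact abs_norm_sq_sub_norm_sq_le (φ x) (φ y)
    _ ≤ (∫ t in Ioc x y, w t ∂μ) * (‖φ x‖ + ‖φ y‖) := by
        gcongr
        exact h hax hxy hyb
    _ = ∫ t in Ioc x y, w t * (‖φ x‖ + ‖φ y‖) ∂μ := (integral_mul_const _ _).symm
    _ ≤ ∫ t in Ioc x y, 2 * (‖φ t‖ * w t) + 2 * ε * w t ∂μ := by
        refine setIntegral_mono_on ((hw.mono_set hsub).mul_const _) (hint.mono_set hsub)
          measurableSet_Ioc fun t ht ↦ ?_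
        linarith [mul_le_mul_of_nonneg_left (hnear t ht) (hw0 t)]

theorem norm_sq (h : IsUpperGradientOn μ φ w a b) (hφ : ContinuousOn φ (Icc a b))
    (hw0 : ∀ t, 0 ≤ w t) (hw : IntegrableOn w (Ioc a b) μ)
    (hφw : IntegrableOn (fun t ↦ ‖φ t‖ * w t) (Ioc a b) μ) :
    IsUpperGradientOn μ (fun t ↦ ‖φ t‖ ^ 2) (fun t ↦ 2 * (‖φ t‖ * w t)) a b := by
  intro x y hax hxy hyb
  have hsub : Ioc x y ⊆ Ioc a b := Ioc_subset_Ioc hax hyb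
  have hbound : ∀ ε > 0, dist (‖φ x‖ ^ 2) (‖φ y‖ ^ 2) ≤
      ∫ t in Ioc x y, 2 * (‖φ t‖ * w t) ∂μ + 2 * ε * ∫ t in Ioc x y, w t ∂μ := by
    intro ε hε
    have := h.norm_sq_add_const hφ hw0 hw hφw hε hax hxy hyb
    rwa [integral_add ((hφw.mono_set hsub).const_mul 2) ((hw.mono_set hsub).const_mul (2 * ε)),
      integral_const_mul (2 * ε)] at this
  have hlim : Filter.Tendsto (fun ε : ℝ ↦ ∫ t in Ioc x y, 2 * (‖φ t‖ * w t) ∂μ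
      + 2 * ε * ∫ t in Ioc x y, w t ∂μ) (nhdsWithin 0 (Ioi 0))
      (nhds (∫ t in Ioc x y, 2 * (‖φ t‖ * w t) ∂μ)) := by
    refine Filter.Tendsto.mono_left ?_ nhdsWithin_le_nhds
    exact Continuous.tendsto' (by fun_prop) _ _ (by simp)
  exact ge_of_tendsto hlim (Filter.eventually_of_mem self_mem_nhdsWithin hbound)

end IsUpperGradientOn

end UpperGradient

section MeasureEstimate

open Set

variable {Y : Type*} [MeasurableSpace Y] {μ : Measure Y}

theorem memLp_top_restrict_of_continuousOn [TopologicalSpace Y] [OpensMeasurableSpace Y]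
    [SecondCountableTopology Y] {F : Type*} [NormedAddCommGroup F]
    {g : Y → F} {s K : Set Y} (hg : ContinuousOn g K) (hK : IsCompact K)
    (hs : MeasurableSet s) (hsK : s ⊆ K) : MemLp g ⊤ (μ.restrict s) := by
  obtain ⟨C, hC⟩ := hK.exists_bound_of_continuousOn hg
  exact memLp_top_of_bound ((hg.mono hsK).aestronglyMeasurable hs) C
    ((ae_restrict_mem hs).mono fun t ht ↦ hC t (hsK ht))

theorem integral_norm_mul_norm_le_sqrt_mul_sqrt {F G : Type*} [NormedAddCommGroup F]
    [NormedAddCommGroup G] {f : Y → F} {g : Y → G} (hf : MemLp f 2 μ) (hg : MemLp g 2 μ) :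
    ∫ t, ‖f t‖ * ‖g t‖ ∂μ ≤ √(∫ t, ‖f t‖ ^ 2 ∂μ) * √(∫ t, ‖g t‖ ^ 2 ∂μ) := by
  simpa only [Real.sqrt_eq_rpow, norm_norm, Real.rpow_two] using
    integral_mul_norm_le_Lp_mul_Lq (μ := μ) (f := fun t ↦ ‖f t‖) (g := fun t ↦ ‖g t‖)
      Real.HolderConjugate.two_two (by simpa using hf.norm) (by simpa using hg.norm)

theorem setIntegral_withDensity_ofReal {F : Type*} [NormedAddCommGroup F] [NormedSpace ℝ F]
    {q : Y → ℝ} {s : Set Y} (hs : MeasurableSet s) (hqm : AEMeasurable q (μ.restrict s))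
    (hq : 0 ≤ᵐ[μ.restrict s] q) (g : Y → F) :
    ∫ t in s, g t ∂μ.withDensity (fun t ↦ ENNReal.ofReal (q t)) = ∫ t in s, q t • g t ∂μ := by
  rw [setIntegral_withDensity_eq_setIntegral_toReal_smul₀ hqm.ennreal_ofReal
    (ae_of_all _ fun _ ↦ ENNReal.ofReal_lt_top) g hs]
  refine integral_congr_ae (hq.mono fun t ht ↦ ?_)
  simp only [ENNReal.toReal_ofReal ht]

theorem memLp_two_withDensity_ofReal {F : Type*} [NormedAddCommGroup F] {q : Y → ℝ} {g : Y → F}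
    (hqm : AEMeasurable q μ) (hq : 0 ≤ᵐ[μ] q) (hg : AEStronglyMeasurable g μ)
    (hg2 : Integrable (fun t ↦ q t * ‖g t‖ ^ 2) μ) :
    MemLp g 2 (μ.withDensity fun t ↦ ENNReal.ofReal (q t)) := by
  rw [memLp_two_iff_integrable_sq_norm (hg.mono_ac (withDensity_absolutelyContinuous _ _)),
    integrable_withDensity_iff_integrable_smul₀' hqm.ennreal_ofReal
      (ae_of_all _ fun _ ↦ ENNReal.ofReal_lt_top)]
  refine hg2.congr (hq.mono fun t ht ↦ ?_)
  simp only [ENNReal.toReal_ofReal ht, smul_eq_mul]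

theorem integral_pos_of_ae_pos [NeZero μ] {f : Y → ℝ} (hf : ∀ᵐ t ∂μ, 0 < f t)
    (hfi : Integrable f μ) : 0 < ∫ t, f t ∂μ := by
  have hf0 : 0 ≤ᵐ[μ] f := hf.mono fun _ ↦ le_of_lt
  refine (integral_nonneg_of_ae hf0).lt_of_ne' fun hzero ↦ ?_
  obtain ⟨t, hpos, heq⟩ := (hf.and ((integral_eq_zero_iff_of_nonneg_ae hf0 hfi).1 hzero)).exists
  exact hpos.ne' heq

theorem intervalIntegral_pos_of_ae_pos {f : ℝ → ℝ} {a b : ℝ} (hab : a < b)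
    (hf : ∀ᵐ t ∂volume.restrict (Ioc a b), 0 < f t) (hfi : IntegrableOn f (Ioc a b)) :
    0 < ∫ t in a..b, f t := by
  have : NeZero (volume.restrict (Ioc a b)) := ⟨by simp [hab]⟩
  rw [intervalIntegral.integral_of_le hab.le]
  exact integral_pos_of_ae_pos hf hfi

theorem setIntegral_Ioc_withDensity_ofReal {F : Type*} [NormedAddCommGroup F] [NormedSpace ℝ F]
    {q : ℝ → ℝ} {a b x : ℝ} (hqi : IntegrableOn q (Ioc a b))
    (hq : 0 ≤ᵐ[volume.restrict (Ioc a b)] q) (hx : x ∈ Icc a b) (g : ℝ → F) :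
    ∫ t in Ioc a x, g t ∂volume.withDensity (fun t ↦ ENNReal.ofReal (q t)) =
      ∫ t in a..x, q t • g t := by
  have hsub : Ioc a x ⊆ Ioc a b := Ioc_subset_Ioc_right hx.2
  rw [intervalIntegral.integral_of_le hx.1]
  exact setIntegral_withDensity_ofReal measurableSet_Ioc
    (hqi.mono_set hsub).aestronglyMeasurable.aemeasurable
    (ae_restrict_of_ae_restrict_of_subset hsub hq) g

end MeasureEstimate

section SupNorm

open Set

variable {E : Type*} [NormedAddCommGroup E] {a b : ℝ} {φ : ℝ → E}

theorem IsUpperGradientOn.sSup_norm_sq_le {F : Type*} [NormedAddCommGroup F] {μ : Measure ℝ}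
    {u : ℝ → F} (h : IsUpperGradientOn μ φ (fun t ↦ ‖u t‖) a b) (hμ₀ : μ (Ioc a b) ≠ 0)
    (hμ : μ (Ioc a b) ≠ ⊤) (hφ : ContinuousOn φ (Icc a b))
    (hu : MemLp u 2 (μ.restrict (Ioc a b))) :
    (sSup ((fun x ↦ ‖φ x‖) '' Icc a b)) ^ 2 ≤
      2 * √(∫ t in Ioc a b, ‖u t‖ ^ 2 ∂μ) * √(∫ t in Ioc a b, ‖φ t‖ ^ 2 ∂μ)
        + (μ.real (Ioc a b))⁻¹ * ∫ t in Ioc a b, ‖φ t‖ ^ 2 ∂μ := by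
  have : IsFiniteMeasure (μ.restrict (Ioc a b)) := isFiniteMeasure_restrict.2 hμ
  have hab : a < b := nonempty_Ioc.1 (nonempty_of_measure_ne_zero hμ₀)
  have hφ2 : MemLp φ 2 (μ.restrict (Ioc a b)) := (memLp_top_restrict_of_continuousOn hφ
    isCompact_Icc measurableSet_Ioc Ioc_subset_Icc_self).mono_exponent le_top
  have hφu : IntegrableOn (fun t ↦ ‖φ t‖ * ‖u t‖) (Ioc a b) μ := hφ2.norm.integrable_mul hu.norm
  obtain ⟨x, hx, hmax⟩ :=
    isCompact_Icc.exists_sSup_image_eq (nonempty_Icc.2 hab.le) hφ.norm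
  obtain ⟨y, hy, hmean⟩ := exists_le_setAverage hμ₀ hμ
    ((memLp_two_iff_integrable_sq_norm hφ2.1).1 hφ2)
  rw [setAverage_eq, smul_eq_mul] at hmean
  have hosc : ‖φ x‖ ^ 2 - ‖φ y‖ ^ 2 ≤ 2 * ∫ t in Ioc a b, ‖φ t‖ * ‖u t‖ ∂μ := by
    rw [← integral_const_mul]
    exact (le_abs_self _).trans <|
      (h.norm_sq hφ (fun _ ↦ norm_nonneg _) (hu.integrable one_le_two).norm hφu).dist_le_setIntegral
        (fun _ ↦ by positivity) (hφu.const_mul 2) hx (Ioc_subset_Icc_self hy)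
  have hCS := integral_norm_mul_norm_le_sqrt_mul_sqrt hφ2 hu
  rw [hmax]
  linarith

theorem isUpperGradientOn_of_eq_add_setIntegral [NormedSpace ℝ E] {μ : Measure ℝ} {g : ℝ → E}
    (hg : IntegrableOn g (Ioc a b) μ)
    (hφ : ∀ x ∈ Icc a b, φ x = φ a + ∫ t in Ioc a x, g t ∂μ) :
    IsUpperGradientOn μ φ (fun t ↦ ‖g t‖) a b := by
  intro x y hax hxy hyb
  have hincr : φ y - φ x = ∫ t in Ioc x y, g t ∂μ := by
    rw [hφ y ⟨hax.trans hxy, hyb⟩, hφ x ⟨hax, hxy.trans hyb⟩,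
      ← setIntegral_Ioc_add_adjacent hax hxy (hg.mono_set (Ioc_subset_Ioc_right hyb))]
    abel
  rw [dist_comm, dist_eq_norm, hincr]
  exact norm_integral_le_integral_norm _

theorem sup_norm_squared_estimate_general [NormedSpace ℝ E] [CompleteSpace E] (hab : a ≤ b)
    {q : ℝ → ℝ} (hq : ∀ᵐ t ∂volume.restrict (Ioc a b), 0 ≤ q t) (hqi : IntegrableOn q (Ioc a b))
    (hq_pos : 0 < ∫ t in a..b, q t) {u : ℝ → E} (hφc : ContinuousOn φ (Icc a b))
    (hum : AEStronglyMeasurable u (volume.restrict (Ioc a b)))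
    (hφ : ∀ x ∈ Icc a b, φ x = φ a + ∫ t in a..x, q t • u t)
    (hu2 : IntegrableOn (fun t ↦ q t * ‖u t‖ ^ 2) (Ioc a b)) :
    (sSup ((fun x ↦ ‖φ x‖) '' Icc a b)) ^ 2 ≤
      2 * √(∫ t in a..b, q t * ‖u t‖ ^ 2) * √(∫ t in a..b, q t * ‖φ t‖ ^ 2)
        + (∫ t in a..b, q t)⁻¹ * ∫ t in a..b, q t * ‖φ t‖ ^ 2 := by
  set μ : Measure ℝ := volume.withDensity fun t ↦ ENNReal.ofReal (q t)
  have hμ_restrict : μ.restrict (Ioc a b) =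
      (volume.restrict (Ioc a b)).withDensity fun t ↦ ENNReal.ofReal (q t) :=
    restrict_withDensity measurableSet_Ioc _
  have hb : b ∈ Icc a b := right_mem_Icc.2 hab
  have hμ_mass : μ.real (Ioc a b) = ∫ t in a..b, q t := by
    simpa using setIntegral_Ioc_withDensity_ofReal hqi hq hb fun _ ↦ (1 : ℝ)
  have hμ_fin : IsFiniteMeasure (μ.restrict (Ioc a b)) :=
    hμ_restrict ▸ isFiniteMeasure_withDensity_ofReal hqi.hasFiniteIntegral
  have hu : MemLp u 2 (μ.restrict (Ioc a b)) :=
    hμ_restrict ▸ memLp_two_withDensity_ofReal hqi.aestronglyMeasurable.aemeasurable hq hum hu2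
  have hgrad : IsUpperGradientOn μ φ (fun t ↦ ‖u t‖) a b :=
    isUpperGradientOn_of_eq_add_setIntegral (hu.integrable one_le_two) fun x hx ↦ by
      rw [setIntegral_Ioc_withDensity_ofReal hqi hq hx, hφ x hx]
  have hμ₀ : μ (Ioc a b) ≠ 0 := fun hzero ↦ hq_pos.ne' (by simp [← hμ_mass, measureReal_def, hzero])
  simpa only [μ, setIntegral_Ioc_withDensity_ofReal hqi hq hb, hμ_mass, smul_eq_mul] using
    hgrad.sSup_norm_sq_le hμ₀ (isFiniteMeasure_restrict.1 hμ_fin) hφc hu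

end SupNorm

/-- Estimate (5.4) of the paper:
‖φ‖_∞² ≤ 2‖φ'‖_{p,2}·‖φ‖_{1/p,2} + ‖1/p‖_{L¹}⁻¹·‖φ‖_{1/p,2}²,
where u = pφ' is the quasi-derivative of φ. -/
theorem sup_norm_squared_estimate
    (a b : ℝ) (hab : a < b) (p : ℝ → ℝ)
    (hpm : Measurable p)
    (hp_pos : ∀ᵐ x ∂(volume.restrict (Set.Ioc a b)), 0 < p x)
    (hp_int : IntegrableOn (fun x => 1 / p x) (Set.Ioc a b))
    (φ u : ℝ → ℂ)
    (hφc : ContinuousOn φ (Set.Icc a b)) (huc : ContinuousOn u (Set.Icc a b))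
    (hφ : ∀ x ∈ Set.Icc a b, φ x = φ a + ∫ t in a..x, u t / (p t : ℂ))
    (hu2 : IntegrableOn (fun t => ‖u t‖ ^ 2 / p t) (Set.Ioc a b))
    (hφ2 : IntegrableOn (fun t => ‖φ t‖ ^ 2 / p t) (Set.Ioc a b)) :
    (sSup ((fun x => ‖φ x‖) '' Set.Icc a b)) ^ 2
      ≤ 2 * Real.sqrt (∫ t in a..b, ‖u t‖ ^ 2 / p t)
            * Real.sqrt (∫ t in a..b, ‖φ t‖ ^ 2 / p t)
        + (∫ t in a..b, 1 / p t)⁻¹ * (∫ t in a..b, ‖φ t‖ ^ 2 / p t) := by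
  have hq : ∀ᵐ t ∂volume.restrict (Set.Ioc a b), 0 < 1 / p t := hp_pos.mono fun _ ↦ one_div_pos.2
  simpa only [one_div, div_eq_inv_mul, mul_one] using
    sup_norm_squared_estimate_general hab.le (hq.mono fun _ ↦ le_of_lt) hp_int
      (intervalIntegral_pos_of_ae_pos hab hq hp_int) hφc
      ((huc.mono Set.Ioc_subset_Icc_self).aestronglyMeasurable measurableSet_Ioc)
      (by simpa [div_eq_inv_mul] using hφ) (by simpa [div_eq_inv_mul] using hu2)
end

section
/- Let p, g, w be real-valued measurable functions on (a,b) with p > 0 a.e., 1/p ∈ L¹(a,b), w ∈ L¹(a,b), and g(x)w(x) > 0 for a.e. x ∈ (a,b), with g bounded. Let γ > 0 and let φ : [a,b] → ℂ be measurable with ∫ₐᵇ |φ|²/p = 1 and sup|φ| ≤ γ. If ε > 0 satisfies μ_{1/p}({x ∈ [a,b] : p(x)g(x)w(x) < ε}) ≤ 1/(2γ²), where μ_{1/p} is the measure with density 1/p with respect to Lebesgue measure, then ∫ₐᵇ g(x)w(x)|φ(x)|² dx ≥ ε/2. -/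
open MeasureTheory Real Complex

/-!
Let `ν` be the measure with density `1 / p`. In terms of `ν` the normalization reads
`∫ ‖φ‖² ∂ν = 1` and the integral to be bounded is `∫ (p g w) ‖φ‖² ∂ν`. The exceptional set
`{p g w < ε}` carries at most `γ² ν {p g w < ε} ≤ 1 / 2` of the mass of `‖φ‖²`, so at least half
of that mass lies where the factor `p g w` is at least `ε`.
-/

section

variable {α : Type*} [MeasurableSpace α] {μ : Measure α}

theorem mul_setLIntegral_ge_le_lintegral_mul {q : α → ENNReal} (hq : AEMeasurable q μ)
    (u : α → ENNReal) (ε : ENNReal) :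
    ε * ∫⁻ x in {x | ε ≤ q x}, u x ∂μ ≤ ∫⁻ x, q x * u x ∂μ :=
  calc ε * ∫⁻ x in {x | ε ≤ q x}, u x ∂μ
      ≤ ∫⁻ x in {x | ε ≤ q x}, ε * u x ∂μ := lintegral_const_mul_le _ _
    _ ≤ ∫⁻ x in {x | ε ≤ q x}, q x * u x ∂μ := by
        refine lintegral_mono_ae ?_
        filter_upwards [ae_restrict_mem₀ (nullMeasurableSet_le aemeasurable_const hq)] with x hx
        exact mul_le_mul_left hx _
    _ ≤ ∫⁻ x, q x * u x ∂μ := setLIntegral_le_lintegral _ _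

theorem lintegral_le_mul_meas_lt_add_setLIntegral_ge {u : α → ENNReal} {C : ENNReal}
    (hu : ∀ᵐ x ∂μ, u x ≤ C) (q : α → ENNReal) (ε : ENNReal) :
    ∫⁻ x, u x ∂μ ≤ C * μ {x | q x < ε} + ∫⁻ x in {x | ε ≤ q x}, u x ∂μ := by
  have hcover : {x | q x < ε} ∪ {x | ε ≤ q x} = Set.univ :=
    Set.eq_univ_of_forall fun x => lt_or_ge (q x) ε
  calc ∫⁻ x, u x ∂μ
      = ∫⁻ x in {x | q x < ε} ∪ {x | ε ≤ q x}, u x ∂μ := by rw [hcover, setLIntegral_univ]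
    _ ≤ ∫⁻ x in {x | q x < ε}, u x ∂μ + ∫⁻ x in {x | ε ≤ q x}, u x ∂μ :=
        lintegral_union_le _ _ _
    _ ≤ C * μ {x | q x < ε} + ∫⁻ x in {x | ε ≤ q x}, u x ∂μ := by
        gcongr
        exact (lintegral_mono_ae (ae_restrict_of_ae hu)).trans_eq (setLIntegral_const _ _)

theorem mul_lintegral_le_mul_meas_lt_add_lintegral_mul {q u : α → ENNReal} {C : ENNReal}
    (hq : AEMeasurable q μ) (hu : ∀ᵐ x ∂μ, u x ≤ C) (ε : ENNReal) :
    ε * ∫⁻ x, u x ∂μ ≤ ε * (C * μ {x | q x < ε}) + ∫⁻ x, q x * u x ∂μ :=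
  calc ε * ∫⁻ x, u x ∂μ
      ≤ ε * (C * μ {x | q x < ε} + ∫⁻ x in {x | ε ≤ q x}, u x ∂μ) := by
        gcongr
        exact lintegral_le_mul_meas_lt_add_setLIntegral_ge hu q ε
    _ ≤ ε * (C * μ {x | q x < ε}) + ∫⁻ x, q x * u x ∂μ := by
        rw [mul_add]
        gcongr
        exact mul_setLIntegral_ge_le_lintegral_mul hq u ε

theorem withDensity_restrict_apply {s : Set α} (hs : MeasurableSet s) (d : α → ENNReal)
    (t : Set α) : (μ.restrict s).withDensity d t = μ.withDensity d (t ∩ s) := by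
  rw [← restrict_withDensity hs, Measure.restrict_apply' hs]

theorem integrable_mul_norm_sq_of_ae_norm_le {E : Type*} [SeminormedAddCommGroup E]
    {f : α → ℝ} {φ : α → E} {γ : ℝ} (hf : Integrable f μ) (hφm : AEStronglyMeasurable φ μ)
    (hφ : ∀ᵐ x ∂μ, ‖φ x‖ ≤ γ) : Integrable (fun x => f x * ‖φ x‖ ^ 2) μ :=
  hf.mul_bdd (c := γ ^ 2) (hφm.norm.pow 2) <|
    hφ.mono fun x hx => by rw [norm_pow, norm_norm]; gcongr

variable {p : α → ℝ}

theorem lintegral_ofReal_withDensity_one_div (hp : AEMeasurable p μ)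
    (hp_pos : ∀ᵐ x ∂μ, 0 < p x) (h : α → ℝ) :
    ∫⁻ x, ENNReal.ofReal (h x) ∂(μ.withDensity fun x => ENNReal.ofReal (1 / p x)) =
      ∫⁻ x, ENNReal.ofReal (h x / p x) ∂μ := by
  rw [lintegral_withDensity_eq_lintegral_mul_non_measurable₀ μ
    (hp.const_div 1).ennreal_ofReal (ae_of_all _ fun _ => ENNReal.ofReal_lt_top)]
  refine lintegral_congr_ae ?_
  filter_upwards [hp_pos] with x hx
  rw [Pi.mul_apply, ← ENNReal.ofReal_mul (one_div_nonneg.mpr hx.le), one_div_mul_eq_div]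

theorem lintegral_ofReal_mul_withDensity_one_div (hp : AEMeasurable p μ)
    (hp_pos : ∀ᵐ x ∂μ, 0 < p x) (h : α → ℝ) :
    ∫⁻ x, ENNReal.ofReal (p x * h x) ∂(μ.withDensity fun x => ENNReal.ofReal (1 / p x)) =
      ∫⁻ x, ENNReal.ofReal (h x) ∂μ := by
  rw [lintegral_ofReal_withDensity_one_div hp hp_pos]
  refine lintegral_congr_ae ?_
  filter_upwards [hp_pos] with x hx
  rw [mul_div_cancel_left₀ _ hx.ne']

variable {E : Type*} [SeminormedAddCommGroup E] {f : α → ℝ} {φ : α → E}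

theorem lintegral_norm_sq_withDensity_one_div (hp : AEMeasurable p μ)
    (hp_pos : ∀ᵐ x ∂μ, 0 < p x) (hφp : Integrable (fun x => ‖φ x‖ ^ 2 / p x) μ) :
    ∫⁻ x, ENNReal.ofReal (‖φ x‖ ^ 2) ∂(μ.withDensity fun x => ENNReal.ofReal (1 / p x)) =
      ENNReal.ofReal (∫ x, ‖φ x‖ ^ 2 / p x ∂μ) := by
  have hnonneg : ∀ᵐ x ∂μ, 0 ≤ ‖φ x‖ ^ 2 / p x := hp_pos.mono fun x hx => by positivity
  rw [lintegral_ofReal_withDensity_one_div hp hp_pos,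
    ofReal_integral_eq_lintegral_ofReal hφp hnonneg]

theorem lintegral_mul_norm_sq_withDensity_one_div (hp : AEMeasurable p μ)
    (hp_pos : ∀ᵐ x ∂μ, 0 < p x) (hf : ∀ᵐ x ∂μ, 0 ≤ f x)
    (hfφ : Integrable (fun x => f x * ‖φ x‖ ^ 2) μ) :
    ∫⁻ x, ENNReal.ofReal (p x * f x) * ENNReal.ofReal (‖φ x‖ ^ 2)
        ∂(μ.withDensity fun x => ENNReal.ofReal (1 / p x)) =
      ENNReal.ofReal (∫ x, f x * ‖φ x‖ ^ 2 ∂μ) := by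
  have hnonneg : ∀ᵐ x ∂μ, 0 ≤ f x * ‖φ x‖ ^ 2 := hf.mono fun x hx => by positivity
  simp only [← ENNReal.ofReal_mul' (sq_nonneg _), mul_assoc]
  rw [lintegral_ofReal_mul_withDensity_one_div hp hp_pos,
    ofReal_integral_eq_lintegral_ofReal hfφ hnonneg]

theorem ofReal_sq_mul_le_ofReal_one_half {γ : ℝ} (hγ : 0 < γ) {m : ENNReal}
    (hm : m ≤ ENNReal.ofReal (1 / (2 * γ ^ 2))) :
    ENNReal.ofReal (γ ^ 2) * m ≤ ENNReal.ofReal (1 / 2) :=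
  calc ENNReal.ofReal (γ ^ 2) * m
      ≤ ENNReal.ofReal (γ ^ 2) * ENNReal.ofReal (1 / (2 * γ ^ 2)) := by gcongr
    _ = ENNReal.ofReal (1 / 2) := by
        rw [← ENNReal.ofReal_mul (sq_nonneg γ)]
        congr 1
        field_simp

theorem key_lower_estimate_general (hp : AEMeasurable p μ) (hp_pos : ∀ᵐ x ∂μ, 0 < p x)
    (hfm : AEMeasurable f μ) (hf : ∀ᵐ x ∂μ, 0 ≤ f x)
    (hfφ : Integrable (fun x => f x * ‖φ x‖ ^ 2) μ)
    (hφ_norm : ∫ x, ‖φ x‖ ^ 2 / p x ∂μ = 1)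
    {γ : ℝ} (hγ : 0 < γ) (hφ_sup : ∀ᵐ x ∂μ, ‖φ x‖ ≤ γ) {ε : ℝ} (hε : 0 < ε)
    (hεcond : (μ.withDensity fun x => ENNReal.ofReal (1 / p x)) {x | p x * f x < ε} ≤
      ENNReal.ofReal (1 / (2 * γ ^ 2))) :
    ε / 2 ≤ ∫ x, f x * ‖φ x‖ ^ 2 ∂μ := by
  set ν : Measure α := μ.withDensity fun x => ENNReal.ofReal (1 / p x)
  have hφp : Integrable (fun x => ‖φ x‖ ^ 2 / p x) μ :=
    .of_integral_ne_zero (hφ_norm.trans_ne one_ne_zero)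
  have hνμ : ν ≪ μ := withDensity_absolutelyContinuous _ _
  have hmarkov := mul_lintegral_le_mul_meas_lt_add_lintegral_mul
    (q := fun x => ENNReal.ofReal (p x * f x)) (u := fun x => ENNReal.ofReal (‖φ x‖ ^ 2))
    (C := ENNReal.ofReal (γ ^ 2)) ((hp.mul hfm).ennreal_ofReal.mono_ac hνμ)
    (hνμ.ae_le (hφ_sup.mono fun x hx => by gcongr)) (ENNReal.ofReal ε)
  rw [lintegral_norm_sq_withDensity_one_div hp hp_pos hφp, hφ_norm, ENNReal.ofReal_one, mul_one,
    lintegral_mul_norm_sq_withDensity_one_div hp hp_pos hf hfφ] at hmarkov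
  have hexceptional : ENNReal.ofReal (γ ^ 2) *
      ν {x | ENNReal.ofReal (p x * f x) < ENNReal.ofReal ε} ≤ ENNReal.ofReal (1 / 2) := by
    simp only [ENNReal.ofReal_lt_ofReal_iff hε]
    exact ofReal_sq_mul_le_ofReal_one_half hγ hεcond
  have hintegral_nonneg : 0 ≤ ∫ x, f x * ‖φ x‖ ^ 2 ∂μ :=
    integral_nonneg_of_ae (hf.mono fun x hx => mul_nonneg hx (sq_nonneg _))
  have hhalf : ENNReal.ofReal ε ≤
      ENNReal.ofReal (ε * (1 / 2) + ∫ x, f x * ‖φ x‖ ^ 2 ∂μ) := by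
    rw [ENNReal.ofReal_add (by positivity) hintegral_nonneg, ENNReal.ofReal_mul hε.le]
    exact hmarkov.trans (by gcongr)
  have := (ENNReal.ofReal_le_ofReal_iff (by positivity)).mp hhalf
  linarith

end

/-- The key estimate (3.8) in the proof of Theorem 3.2:
if ∫ₐᵇ |φ|²/p = 1, sup|φ| ≤ γ, gw > 0 a.e., and
μ_{1/p}({pgw < ε}) ≤ 1/(2γ²), then ∫ₐᵇ gw|φ|² ≥ ε/2. -/
theorem key_lower_estimate
    (a b : ℝ) (hab : a < b) (p g w : ℝ → ℝ)
    (hpm : Measurable p) (hgm : Measurable g) (hwm : Measurable w)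
    (hp_pos : ∀ᵐ x ∂(volume.restrict (Set.Ioc a b)), 0 < p x)
    (hp_int : IntegrableOn (fun x => 1 / p x) (Set.Ioc a b))
    (hw_int : IntegrableOn w (Set.Ioc a b))
    (hgw : ∀ᵐ x ∂(volume.restrict (Set.Ioc a b)), 0 < g x * w x)
    (hg_bdd : ∃ M : ℝ, ∀ x ∈ Set.Icc a b, |g x| ≤ M)
    (γ : ℝ) (hγ : 0 < γ)
    (φ : ℝ → ℂ) (hφm : Measurable φ)
    (hφ_norm : ∫ t in a..b, ‖φ t‖ ^ 2 / p t = 1)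
    (hφ_sup : ∀ x ∈ Set.Icc a b, ‖φ x‖ ≤ γ)
    (ε : ℝ) (hε : 0 < ε)
    (hεcond : (volume.withDensity fun x => ENNReal.ofReal (1 / p x))
        {x | x ∈ Set.Icc a b ∧ p x * g x * w x < ε} ≤ ENNReal.ofReal (1 / (2 * γ ^ 2))) :
    ε / 2 ≤ ∫ t in a..b, g t * w t * ‖φ t‖ ^ 2 := by
  obtain ⟨M, hM⟩ := hg_bdd
  have hIcc : ∀ᵐ x ∂(volume.restrict (Set.Ioc a b)), x ∈ Set.Icc a b :=
    (ae_restrict_mem measurableSet_Ioc).mono fun _ hx => Set.Ioc_subset_Icc_self hx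
  have hgw_int : IntegrableOn (fun t => g t * w t) (Set.Ioc a b) :=
    hw_int.bdd_mul hgm.aestronglyMeasurable (hIcc.mono hM)
  have hgwφ_int : IntegrableOn (fun t => g t * w t * ‖φ t‖ ^ 2) (Set.Ioc a b) :=
    integrable_mul_norm_sq_of_ae_norm_le hgw_int hφm.aestronglyMeasurable (hIcc.mono hφ_sup)
  have hsub : {x | p x * (g x * w x) < ε} ∩ Set.Ioc a b ⊆
      {x | x ∈ Set.Icc a b ∧ p x * g x * w x < ε} :=
    fun _ hx => ⟨Set.Ioc_subset_Icc_self hx.2, (mul_assoc _ _ _).trans_lt hx.1⟩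
  rw [intervalIntegral.integral_of_le hab.le] at hφ_norm ⊢
  exact key_lower_estimate_general hpm.aemeasurable hp_pos (hgm.mul hwm).aemeasurable
    (hgw.mono fun _ => le_of_lt) hgwφ_int hφ_norm hγ (hIcc.mono hφ_sup) hε <|
    (withDensity_restrict_apply measurableSet_Ioc _ _).trans_le <|
      (measure_mono hsub).trans hεcond
end

section
/- Let λ ∈ ℂ with Im λ ≠ 0 and let (φ, u) be a solution of −(pφ')' + qφ = λwφ on [a,b] satisfying separated self-adjoint boundary conditions u(a) = l·φ(a), u(b) = r·φ(b) with l, r ∈ ℝ. Then ‖φ'‖_{p,2} ≤ β·‖φ‖_{1/p,2} and ‖φ‖_∞ ≤ γ·‖φ‖_{1/p,2}, where the constants α, β, γ are built from c := |l| + |r|. -/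
open MeasureTheory Real Complex

/-! Green's first identity reads `[φ̄ u]ₐᵇ = ‖φ'‖²_{p,2} + ∫ q|φ|² - λ ∫ w|φ|²`. Its left side is
real for self-adjoint boundary conditions, so for non-real `λ` the imaginary part forces
`∫ w|φ|² = 0`, and the real part gives `‖φ'‖²_{p,2} ≤ α ‖φ‖²_∞`. Conversely `|φ|²` oscillates by at
most `2 ‖φ‖_{1/p,2} ‖φ'‖_{p,2}`, hence exceeds its `1/p`-weighted mean by no more than that:
`‖φ‖²_∞ ≤ ‖φ‖²_{1/p,2} / ‖1/p‖_{L¹} + 2 ‖φ‖_{1/p,2} ‖φ'‖_{p,2}`. Together these are a quadratic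
inequality for `‖φ'‖_{p,2}`, and completing the square produces `β`. -/

section Primitive

variable {E G : Type*} [NormedAddCommGroup E] [NormedSpace ℝ E]
  [NormedAddCommGroup G] [NormedSpace ℝ G] {F f : ℝ → E} {a b x y : ℝ}

/-- `F` is an indefinite integral on `[[a, b]]` of the interval integrable function `f`;
equivalently, `F` is absolutely continuous there with derivative `f` almost everywhere. -/
structure IsPrimitiveOn (F f : ℝ → E) (a b : ℝ) : Prop where
  intervalIntegrable : IntervalIntegrable f volume a b
  eq_add_integral : ∀ x ∈ Set.uIcc a b, F x = F a + ∫ t in a..x, f t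

namespace IsPrimitiveOn

lemma sub_eq_integral (h : IsPrimitiveOn F f a b) (hx : x ∈ Set.uIcc a b)
    (hy : y ∈ Set.uIcc a b) : F x - F y = ∫ t in y..x, f t := by
  have integrable_to : ∀ z ∈ Set.uIcc a b, IntervalIntegrable f volume a z := fun z hz =>
    h.intervalIntegrable.mono_set (Set.uIcc_subset_uIcc Set.left_mem_uIcc hz)
  rw [h.eq_add_integral x hx, h.eq_add_integral y hy, add_sub_add_left_eq_sub,
    intervalIntegral.integral_interval_sub_left (integrable_to x hx) (integrable_to y hy)]

lemma norm_sub_le (h : IsPrimitiveOn F f a b) (hx : x ∈ Set.uIcc a b)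
    (hy : y ∈ Set.uIcc a b) : ‖F x - F y‖ ≤ |∫ t in a..b, ‖f t‖| := by
  rw [h.sub_eq_integral hx hy]
  refine intervalIntegral.norm_integral_le_abs_integral_norm.trans ?_
  exact intervalIntegral.abs_integral_mono_interval
    (Set.uIoc_subset_uIoc_of_uIcc_subset_uIcc (Set.uIcc_subset_uIcc hy hx))
    (ae_of_all _ fun _ => norm_nonneg _) h.intervalIntegrable.norm

/-- Mathlib has this for real-valued integrands only, hence the comparison with `∫ ‖f‖`, whose
increments dominate those of `F`. -/
lemma absolutelyContinuousOnInterval (h : IsPrimitiveOn F f a b) :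
    AbsolutelyContinuousOnInterval F a b := by
  have hnorm := h.intervalIntegrable.norm
  have hprim : IsPrimitiveOn (fun x => ∫ t in a..x, ‖f t‖) (fun t => ‖f t‖) a b :=
    ⟨hnorm, fun x _ => by simp⟩
  refine squeeze_zero' (.of_forall fun _ => Finset.sum_nonneg fun _ _ => dist_nonneg) ?_
    (hnorm.absolutelyContinuousOnInterval_intervalIntegral Set.left_mem_uIcc)
  rw [Filter.eventually_inf_principal]
  filter_upwards with I hI
  refine Finset.sum_le_sum fun i hi => ?_
  obtain ⟨hx, hy⟩ := hI.1 i hi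
  rw [dist_eq_norm, Real.dist_eq, h.sub_eq_integral hx hy, hprim.sub_eq_integral hx hy]
  exact intervalIntegral.norm_integral_le_abs_integral_norm

lemma continuousOn (h : IsPrimitiveOn F f a b) : ContinuousOn F (Set.uIcc a b) :=
  h.absolutelyContinuousOnInterval.continuousOn

lemma ae_hasDerivAt [CompleteSpace E] (h : IsPrimitiveOn F f a b) :
    ∀ᵐ x, x ∈ Set.uIcc a b → HasDerivAt F (f x) x := by
  filter_upwards [h.intervalIntegrable.ae_hasDerivAt_integral, Measure.ae_ne volume (min a b),
    Measure.ae_ne volume (max a b)] with x hderiv hmin hmax hx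
  have hnhds : Set.uIcc a b ∈ nhds x :=
    Icc_mem_nhds (hx.1.lt_of_ne hmin.symm) (hx.2.lt_of_ne hmax)
  refine ((hderiv hx a Set.left_mem_uIcc).const_add (F a)).congr_of_eventuallyEq ?_
  filter_upwards [hnhds] using h.eq_add_integral

lemma of_ae_hasDerivAt [CompleteSpace E] (hF : AbsolutelyContinuousOnInterval F a b)
    (hf : IntervalIntegrable f volume a b)
    (hderiv : ∀ᵐ x, x ∈ Set.uIcc a b → HasDerivAt F (f x) x) : IsPrimitiveOn F f a b := by
  have hprim : IsPrimitiveOn (fun x => ∫ t in a..x, f t) f a b := ⟨hf, fun x _ => by simp⟩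
  obtain ⟨C, hC⟩ :=
    (hF.sub hprim.absolutelyContinuousOnInterval).const_of_ae_hasDerivAt_zero (by
      filter_upwards [hderiv, hprim.ae_hasDerivAt] with x hFx hx hmem
      simpa only [sub_self] using (hFx hmem).sub (hx hmem))
  refine ⟨hf, fun x hx => ?_⟩
  have hconst := (hC x hx).trans (hC a Set.left_mem_uIcc).symm
  simp only [Pi.sub_apply, intervalIntegral.integral_same, sub_zero] at hconst
  exact eq_add_of_sub_eq hconst

lemma mul {A : Type*} [NormedRing A] [NormMulClass A] [NormedAlgebra ℝ A] [CompleteSpace A]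
    {F f G g : ℝ → A} (hF : IsPrimitiveOn F f a b) (hG : IsPrimitiveOn G g a b) :
    IsPrimitiveOn (fun x => F x * G x) (fun x => f x * G x + F x * g x) a b := by
  refine of_ae_hasDerivAt
    (hF.absolutelyContinuousOnInterval.smul hG.absolutelyContinuousOnInterval)
    ((hF.intervalIntegrable.mul_continuousOn hG.continuousOn).add
      (hG.intervalIntegrable.continuousOn_mul hF.continuousOn)) ?_
  filter_upwards [hF.ae_hasDerivAt, hG.ae_hasDerivAt] with x hFx hGx hx
  exact (hFx hx).mul (hGx hx)

lemma clm_comp [CompleteSpace E] [CompleteSpace G] (L : E →L[ℝ] G)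
    (h : IsPrimitiveOn F f a b) :
    IsPrimitiveOn (fun x => L (F x)) (fun x => L (f x)) a b where
  intervalIntegrable := ⟨L.integrable_comp h.intervalIntegrable.1,
    L.integrable_comp h.intervalIntegrable.2⟩
  eq_add_integral x hx := by
    rw [L.intervalIntegral_comp_comm (h.intervalIntegrable.mono_set
      (Set.uIcc_subset_uIcc Set.left_mem_uIcc hx)), ← map_add, ← h.eq_add_integral x hx]

lemma star {𝕜 : Type*} [RCLike 𝕜] {F f : ℝ → 𝕜} (h : IsPrimitiveOn F f a b) :
    IsPrimitiveOn (fun x => (starRingEnd 𝕜) (F x)) (fun x => (starRingEnd 𝕜) (f x)) a b :=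
  h.clm_comp (RCLike.conjCLE (K := 𝕜)).toContinuousLinearMap

lemma norm_sq_sub_norm_sq_le {𝕜 : Type*} [RCLike 𝕜] {F f : ℝ → 𝕜} (hab : a ≤ b)
    (h : IsPrimitiveOn F f a b) (hx : x ∈ Set.Icc a b) (hy : y ∈ Set.Icc a b) :
    ‖F x‖ ^ 2 - ‖F y‖ ^ 2 ≤ 2 * ∫ t in a..b, ‖f t‖ * ‖F t‖ := by
  rw [← Set.uIcc_of_le hab] at hx hy
  have hsq := h.star.mul h
  calc ‖F x‖ ^ 2 - ‖F y‖ ^ 2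
      ≤ ‖((‖F x‖ ^ 2 - ‖F y‖ ^ 2 : ℝ) : 𝕜)‖ := by
        rw [RCLike.norm_ofReal]; exact le_abs_self _
    _ ≤ |∫ t in a..b, ‖(starRingEnd 𝕜) (f t) * F t + (starRingEnd 𝕜) (F t) * f t‖| := by
        simpa only [RCLike.conj_mul, RCLike.ofReal_sub, RCLike.ofReal_pow] using
          hsq.norm_sub_le hx hy
    _ = ∫ t in a..b, ‖(starRingEnd 𝕜) (f t) * F t + (starRingEnd 𝕜) (F t) * f t‖ :=
        abs_of_nonneg (intervalIntegral.integral_nonneg hab fun _ _ => norm_nonneg _)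
    _ ≤ ∫ t in a..b, 2 * (‖f t‖ * ‖F t‖) := by
        refine intervalIntegral.integral_mono hab hsq.intervalIntegrable.norm
          ((h.intervalIntegrable.norm.mul_continuousOn h.continuousOn.norm).const_mul 2)
          fun t => (norm_add_le _ _).trans_eq ?_
        simp only [norm_mul, RCLike.norm_conj]
        ring
    _ = 2 * ∫ t in a..b, ‖f t‖ * ‖F t‖ := intervalIntegral.integral_const_mul _ _

end IsPrimitiveOn

end Primitive

section InverseWeight

variable {E : Type*} [NormedAddCommGroup E] {p : ℝ → ℝ} {a b : ℝ}

/-- The norm `(∫ₐᵇ ‖f‖² / p)^{1/2}` of `L²(a, b)` with weight `1/p`. It is `‖φ‖_{1/p,2}` for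
`f = φ`, and `‖φ'‖_{p,2}` for the quasi-derivative `f = pφ'`. -/
noncomputable def invWeightedNorm (p : ℝ → ℝ) (a b : ℝ) (f : ℝ → E) : ℝ :=
  √(∫ t in a..b, ‖f t‖ ^ 2 / p t)

lemma invWeightedNorm_sq (hab : a ≤ b) (hp_pos : ∀ᵐ x ∂volume.restrict (Set.Icc a b), 0 < p x)
    (f : ℝ → E) : invWeightedNorm p a b f ^ 2 = ∫ t in a..b, ‖f t‖ ^ 2 / p t := by
  refine Real.sq_sqrt (intervalIntegral.integral_nonneg_of_ae_restrict hab ?_)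
  filter_upwards [hp_pos] with t ht
  exact div_nonneg (sq_nonneg _) ht.le

lemma intervalIntegrable_div_of_continuousOn
    (hp_int : IntervalIntegrable (fun x => 1 / p x) volume a b) {f : ℝ → ℝ}
    (hf : ContinuousOn f (Set.uIcc a b)) :
    IntervalIntegrable (fun t => f t / p t) volume a b := by
  simpa only [mul_one_div] using hp_int.continuousOn_mul hf

lemma integral_one_div_pos (hab : a < b)
    (hp_pos : ∀ᵐ x ∂volume.restrict (Set.Icc a b), 0 < p x)
    (hp_int : IntervalIntegrable (fun x => 1 / p x) volume a b) :
    0 < ∫ t in a..b, 1 / p t := by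
  rw [← restrict_Ioc_eq_restrict_Icc] at hp_pos
  rw [intervalIntegral.integral_of_le hab.le, integral_pos_iff_support_of_nonneg_ae _ hp_int.1]
  · have hsupp : Function.support (fun x => 1 / p x) =ᵐ[volume.restrict (Set.Ioc a b)] Set.univ :=
      Filter.eventuallyEq_univ.2 (hp_pos.mono fun x hx => (one_div_pos.2 hx).ne')
    simpa only [measure_congr hsupp, Measure.restrict_apply_univ, Real.volume_Ioc,
      ENNReal.ofReal_pos, sub_pos]
  · exact hp_pos.mono fun x hx => (one_div_pos.2 hx).le

lemma memLp_two_norm_mul_sqrt_one_div (hp_pos : ∀ᵐ x ∂volume.restrict (Set.Icc a b), 0 < p x)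
    (hp_int : IntegrableOn (fun x => 1 / p x) (Set.Icc a b)) {f : ℝ → E}
    (hf : ContinuousOn f (Set.Icc a b)) :
    MemLp (fun t => ‖f t‖ * √(1 / p t)) 2 (volume.restrict (Set.Icc a b)) := by
  have hmeas : AEStronglyMeasurable (fun t => ‖f t‖ * √(1 / p t)) (volume.restrict (Set.Icc a b)) :=
    (hf.norm.aestronglyMeasurable measurableSet_Icc).mul
      (Real.continuous_sqrt.comp_aestronglyMeasurable hp_int.aestronglyMeasurable)
  refine (memLp_two_iff_integrable_sq hmeas).2 ?_
  refine (hp_int.continuousOn_mul (hf.norm.pow 2) isCompact_Icc).congr ?_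
  filter_upwards [hp_pos] with t ht
  simp only [Pi.pow_apply, mul_pow, Real.sq_sqrt (one_div_pos.2 ht).le]

lemma integral_norm_mul_norm_div_le (hab : a ≤ b)
    (hp_pos : ∀ᵐ x ∂volume.restrict (Set.Icc a b), 0 < p x)
    (hp_int : IntervalIntegrable (fun x => 1 / p x) volume a b) {f g : ℝ → E}
    (hf : ContinuousOn f (Set.uIcc a b)) (hg : ContinuousOn g (Set.uIcc a b)) :
    ∫ t in a..b, ‖f t‖ * ‖g t‖ / p t ≤ invWeightedNorm p a b f * invWeightedNorm p a b g := by
  rw [Set.uIcc_of_le hab] at hf hg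
  rw [intervalIntegrable_iff_integrableOn_Icc_of_le hab] at hp_int
  have sqrt_mul_self : ∀ᵐ t ∂volume.restrict (Set.Icc a b), √(1 / p t) * √(1 / p t) = 1 / p t :=
    hp_pos.mono fun t ht => Real.mul_self_sqrt (one_div_pos.2 ht).le
  have sq_eq (h : ℝ → E) : (fun t => (‖h t‖ * √(1 / p t)) ^ (2 : ℝ))
      =ᵐ[volume.restrict (Set.Icc a b)] fun t => ‖h t‖ ^ 2 / p t := by
    filter_upwards [sqrt_mul_self] with t ht
    rw [Real.rpow_two]
    linear_combination ‖h t‖ ^ 2 * ht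
  have hmul : (fun t => ‖f t‖ * √(1 / p t) * (‖g t‖ * √(1 / p t)))
      =ᵐ[volume.restrict (Set.Icc a b)] fun t => ‖f t‖ * ‖g t‖ / p t := by
    filter_upwards [sqrt_mul_self] with t ht
    linear_combination ‖f t‖ * ‖g t‖ * ht
  have nonneg (h : ℝ → E) : ∀ᵐ t ∂volume.restrict (Set.Icc a b), 0 ≤ ‖h t‖ * √(1 / p t) :=
    ae_of_all _ fun t => mul_nonneg (norm_nonneg _) (Real.sqrt_nonneg _)
  have holder := integral_mul_le_Lp_mul_Lq_of_nonneg Real.HolderConjugate.two_two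
    (nonneg f) (nonneg g)
    (by simpa only [ENNReal.ofReal_ofNat] using memLp_two_norm_mul_sqrt_one_div hp_pos hp_int hf)
    (by simpa only [ENNReal.ofReal_ofNat] using memLp_two_norm_mul_sqrt_one_div hp_pos hp_int hg)
  simpa only [invWeightedNorm, intervalIntegral.integral_of_le hab, restrict_Ioc_eq_restrict_Icc,
    integral_congr_ae (sq_eq _), integral_congr_ae hmul, ← Real.sqrt_eq_rpow] using holder

end InverseWeight

section Interpolation

variable {𝕜 : Type*} [RCLike 𝕜] {p : ℝ → ℝ} {a b : ℝ} {φ u : ℝ → 𝕜}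

/-- Averaging the oscillation bound for `‖φ‖²` over the base point with respect to `1/p`. -/
lemma IsPrimitiveOn.norm_sq_le_invWeightedNorm (hab : a < b)
    (hp_pos : ∀ᵐ x ∂volume.restrict (Set.Icc a b), 0 < p x)
    (hp_int : IntervalIntegrable (fun x => 1 / p x) volume a b)
    (hu : ContinuousOn u (Set.uIcc a b)) (hφ : IsPrimitiveOn φ (fun t => u t / (p t : 𝕜)) a b)
    {x : ℝ} (hx : x ∈ Set.Icc a b) :
    ‖φ x‖ ^ 2 ≤ invWeightedNorm p a b φ ^ 2 / (∫ t in a..b, 1 / p t) +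
      2 * (invWeightedNorm p a b φ * invWeightedNorm p a b u) := by
  set S := invWeightedNorm p a b φ * invWeightedNorm p a b u
  have hdiv : ∫ t in a..b, ‖u t / (p t : 𝕜)‖ * ‖φ t‖ = ∫ t in a..b, ‖φ t‖ * ‖u t‖ / p t := by
    simp only [intervalIntegral.integral_of_le hab.le, restrict_Ioc_eq_restrict_Icc]
    refine integral_congr_ae ?_
    filter_upwards [hp_pos] with t ht
    rw [norm_div, RCLike.norm_of_nonneg ht.le]
    ring
  have oscillation : ∀ y ∈ Set.Icc a b, ‖φ x‖ ^ 2 - 2 * S ≤ ‖φ y‖ ^ 2 := fun y hy => by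
    linarith [hdiv ▸ hφ.norm_sq_sub_norm_sq_le hab.le hx hy,
      integral_norm_mul_norm_div_le hab.le hp_pos hp_int hφ.continuousOn hu]
  have averaged : (‖φ x‖ ^ 2 - 2 * S) * (∫ t in a..b, 1 / p t) ≤ invWeightedNorm p a b φ ^ 2 := by
    rw [invWeightedNorm_sq hab.le hp_pos, ← intervalIntegral.integral_const_mul]
    refine intervalIntegral.integral_mono_ae_restrict hab.le (hp_int.const_mul _)
      (intervalIntegrable_div_of_continuousOn hp_int (hφ.continuousOn.norm.pow 2)) ?_
    filter_upwards [hp_pos, ae_restrict_mem measurableSet_Icc] with y hpy hy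
    rw [mul_one_div]
    exact div_le_div_of_nonneg_right (oscillation y hy) hpy.le
  linarith [(le_div_iff₀ (integral_one_div_pos hab hp_pos hp_int)).2 averaged]

end Interpolation

lemma neg_integral_mul_le_integral_negPart_mul {α : Type*} [MeasurableSpace α] {μ : Measure α}
    {q g : α → ℝ} {K : ℝ} (hq : Integrable q μ) (hqg : Integrable (fun x => q x * g x) μ)
    (hg_nonneg : ∀ᵐ x ∂μ, 0 ≤ g x) (hg_le : ∀ᵐ x ∂μ, g x ≤ K) :
    -∫ x, q x * g x ∂μ ≤ (∫ x, |min (q x) 0| ∂μ) * K := by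
  have hq_neg : Integrable (fun x => |min (q x) 0|) μ := (hq.inf (integrable_zero _ _ _)).abs
  rw [← integral_neg, ← integral_mul_const]
  refine integral_mono_ae hqg.neg (hq_neg.mul_const K) ?_
  filter_upwards [hg_nonneg, hg_le] with x hx hxK
  calc -(q x * g x) = -q x * g x := (neg_mul _ _).symm
    _ ≤ |min (q x) 0| * g x := by
        gcongr
        exact (neg_le_neg (min_le_left _ _)).trans (neg_le_abs _)
    _ ≤ |min (q x) 0| * K := by gcongr

section SturmLiouville

variable {p q w : ℝ → ℝ} {lam : ℂ} {a b : ℝ} {φ u : ℝ → ℂ}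

/-- `φ` solves `-u' + qφ = λwφ` on `[a, b]` with quasi-derivative `u = pφ'`, in the integrated form
of the equation as a first-order system. -/
structure IsSturmLiouvilleSolution_s7 (p q w : ℝ → ℝ) (lam : ℂ) (a b : ℝ) (φ u : ℝ → ℂ) : Prop where
  continuousOn : ContinuousOn φ (Set.Icc a b)
  continuousOn_quasiDeriv : ContinuousOn u (Set.Icc a b)
  eq_add_integral : ∀ x ∈ Set.Icc a b, φ x = φ a + ∫ t in a..x, u t / (p t : ℂ)
  quasiDeriv_eq_add_integral : ∀ x ∈ Set.Icc a b,
    u x = u a + ∫ t in a..x, ((q t : ℂ) - lam * (w t : ℂ)) * φ t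

/-- The boundary term `[φ̄ u]ₐᵇ` of Green's first identity. Self-adjoint boundary conditions make
it real. -/
noncomputable def boundaryForm (φ u : ℝ → ℂ) (a b : ℝ) : ℂ :=
  (starRingEnd ℂ) (φ b) * u b - (starRingEnd ℂ) (φ a) * u a

lemma boundaryForm_eq_of_separated {l r : ℝ} (ha : u a = l * φ a) (hb : u b = r * φ b) :
    boundaryForm φ u a b = ((r * ‖φ b‖ ^ 2 - l * ‖φ a‖ ^ 2 : ℝ) : ℂ) := by
  simp only [boundaryForm, ha, hb, ofReal_sub, ofReal_mul, ofReal_pow, ← conj_mul']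
  ring

lemma mul_norm_sq_sub_mul_norm_sq_le (hab : a ≤ b) (hφ : ContinuousOn φ (Set.Icc a b)) (l r : ℝ) :
    r * ‖φ b‖ ^ 2 - l * ‖φ a‖ ^ 2 ≤
      (|l| + |r|) * sSup ((fun x => ‖φ x‖) '' Set.Icc a b) ^ 2 := by
  have hφa := hφ.norm.le_sSup_image_Icc (Set.left_mem_Icc.2 hab)
  have hφb := hφ.norm.le_sSup_image_Icc (Set.right_mem_Icc.2 hab)
  calc r * ‖φ b‖ ^ 2 - l * ‖φ a‖ ^ 2 ≤ |r| * ‖φ b‖ ^ 2 + |l| * ‖φ a‖ ^ 2 := by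
        rw [sub_eq_add_neg, ← neg_mul]
        gcongr
        exacts [le_abs_self r, neg_le_abs l]
    _ ≤ |r| * sSup ((fun x => ‖φ x‖) '' Set.Icc a b) ^ 2 +
          |l| * sSup ((fun x => ‖φ x‖) '' Set.Icc a b) ^ 2 := by gcongr
    _ = (|l| + |r|) * sSup ((fun x => ‖φ x‖) '' Set.Icc a b) ^ 2 := by ring

lemma intervalIntegrable_ofReal {f : ℝ → ℝ} (hf : IntervalIntegrable f volume a b) :
    IntervalIntegrable (fun x => (f x : ℂ)) volume a b :=
  ⟨hf.1.ofReal, hf.2.ofReal⟩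

namespace IsSturmLiouvilleSolution_s7

lemma isPrimitiveOn (hab : a ≤ b) (hp_int : IntervalIntegrable (fun x => 1 / p x) volume a b)
    (h : IsSturmLiouvilleSolution_s7 p q w lam a b φ u) :
    IsPrimitiveOn φ (fun t => u t / p t) a b := by
  have hu := h.continuousOn_quasiDeriv
  rw [← Set.uIcc_of_le hab] at hu
  refine ⟨?_, by simpa only [Set.uIcc_of_le hab] using h.eq_add_integral⟩
  simpa only [ofReal_div, ofReal_one, mul_one_div] using
    (intervalIntegrable_ofReal hp_int).continuousOn_mul hu

lemma isPrimitiveOn_quasiDeriv (hab : a ≤ b) (hq_int : IntervalIntegrable q volume a b)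
    (hw_int : IntervalIntegrable w volume a b)
    (h : IsSturmLiouvilleSolution_s7 p q w lam a b φ u) :
    IsPrimitiveOn u (fun t => ((q t : ℂ) - lam * (w t : ℂ)) * φ t) a b := by
  have hφ := h.continuousOn
  rw [← Set.uIcc_of_le hab] at hφ
  exact ⟨((intervalIntegrable_ofReal hq_int).sub
      ((intervalIntegrable_ofReal hw_int).const_mul lam)).mul_continuousOn hφ,
    by simpa only [Set.uIcc_of_le hab] using h.quasiDeriv_eq_add_integral⟩

lemma boundaryForm_eq (hab : a ≤ b) (hp_int : IntervalIntegrable (fun x => 1 / p x) volume a b)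
    (hq_int : IntervalIntegrable q volume a b) (hw_int : IntervalIntegrable w volume a b)
    (h : IsSturmLiouvilleSolution_s7 p q w lam a b φ u) :
    boundaryForm φ u a b =
      (((∫ t in a..b, ‖u t‖ ^ 2 / p t) + ∫ t in a..b, q t * ‖φ t‖ ^ 2 : ℝ) : ℂ) -
        lam * ((∫ t in a..b, w t * ‖φ t‖ ^ 2 : ℝ) : ℂ) := by
  have hφ := h.isPrimitiveOn hab hp_int
  have hu := h.isPrimitiveOn_quasiDeriv hab hq_int hw_int
  have hu_int : IntervalIntegrable (fun t => ‖u t‖ ^ 2 / p t) volume a b :=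
    intervalIntegrable_div_of_continuousOn hp_int (hu.continuousOn.norm.pow 2)
  have hqφ_int : IntervalIntegrable (fun t => q t * ‖φ t‖ ^ 2) volume a b :=
    hq_int.mul_continuousOn (hφ.continuousOn.norm.pow 2)
  have hwφ_int : IntervalIntegrable (fun t => w t * ‖φ t‖ ^ 2) volume a b :=
    hw_int.mul_continuousOn (hφ.continuousOn.norm.pow 2)
  rw [boundaryForm, (hφ.star.mul hu).sub_eq_integral Set.right_mem_uIcc Set.left_mem_uIcc,
    ← intervalIntegral.integral_add hu_int hqφ_int, ← intervalIntegral.integral_ofReal,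
    ← intervalIntegral.integral_ofReal, ← intervalIntegral.integral_const_mul,
    ← intervalIntegral.integral_sub (intervalIntegrable_ofReal (hu_int.add hqφ_int))
      ((intervalIntegrable_ofReal hwφ_int).const_mul lam)]
  refine intervalIntegral.integral_congr fun t _ => ?_
  simp only [map_div₀, conj_ofReal, ofReal_add, ofReal_div, ofReal_mul, ofReal_pow,
    ← conj_mul']
  ring

lemma integral_norm_quasiDeriv_sq_div_eq (hab : a ≤ b)
    (hp_int : IntervalIntegrable (fun x => 1 / p x) volume a b)
    (hq_int : IntervalIntegrable q volume a b) (hw_int : IntervalIntegrable w volume a b)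
    (hlam : lam.im ≠ 0) (h : IsSturmLiouvilleSolution_s7 p q w lam a b φ u) {k : ℝ}
    (hk : boundaryForm φ u a b = k) :
    ∫ t in a..b, ‖u t‖ ^ 2 / p t = k - ∫ t in a..b, q t * ‖φ t‖ ^ 2 := by
  have green := hk.symm.trans (h.boundaryForm_eq hab hp_int hq_int hw_int)
  have him := congrArg Complex.im green
  have hre := congrArg Complex.re green
  simp only [sub_im, sub_re, ofReal_im, ofReal_re, im_mul_ofReal, re_mul_ofReal] at him hre
  have hw_zero : ∫ t in a..b, w t * ‖φ t‖ ^ 2 = 0 :=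
    (mul_eq_zero.1 (show lam.im * _ = 0 by linarith)).resolve_left hlam
  rw [hw_zero, mul_zero] at hre
  linarith

lemma invWeightedNorm_quasiDeriv_sq_le (hab : a ≤ b)
    (hp_pos : ∀ᵐ x ∂volume.restrict (Set.Icc a b), 0 < p x)
    (hp_int : IntervalIntegrable (fun x => 1 / p x) volume a b)
    (hq_int : IntervalIntegrable q volume a b) (hw_int : IntervalIntegrable w volume a b)
    (hlam : lam.im ≠ 0) (h : IsSturmLiouvilleSolution_s7 p q w lam a b φ u) {c k : ℝ}
    (hk : boundaryForm φ u a b = k)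
    (hkc : k ≤ c * sSup ((fun x => ‖φ x‖) '' Set.Icc a b) ^ 2) :
    invWeightedNorm p a b u ^ 2 ≤
      (c + ∫ t in a..b, |min (q t) 0|) * sSup ((fun x => ‖φ x‖) '' Set.Icc a b) ^ 2 := by
  have hqφ_int : IntervalIntegrable (fun t => q t * ‖φ t‖ ^ 2) volume a b :=
    hq_int.mul_continuousOn ((h.isPrimitiveOn hab hp_int).continuousOn.norm.pow 2)
  have hφ_le : ∀ᵐ x ∂volume.restrict (Set.Ioc a b),
      ‖φ x‖ ^ 2 ≤ sSup ((fun x => ‖φ x‖) '' Set.Icc a b) ^ 2 := by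
    filter_upwards [ae_restrict_mem measurableSet_Ioc] with x hx
    gcongr
    exact h.continuousOn.norm.le_sSup_image_Icc (Set.Ioc_subset_Icc_self hx)
  have hneg := neg_integral_mul_le_integral_negPart_mul hq_int.1 hqφ_int.1
    (ae_of_all _ fun _ => sq_nonneg _) hφ_le
  rw [invWeightedNorm_sq hab hp_pos,
    h.integral_norm_quasiDeriv_sq_div_eq hab hp_int hq_int hw_int hlam hk, add_mul]
  simp only [intervalIntegral.integral_of_le hab]
  linarith

end IsSturmLiouvilleSolution_s7

/-- Substituting the bound on `M²` into the one on `D²` gives a quadratic inequality for `D`, which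
is solved by completing the square: `(D - αN)² ≤ α (1/P + α) N²`. -/
lemma le_mul_of_sq_le_mul_sq {α P N D M : ℝ} (hα : 0 ≤ α) (hP : 0 < P) (hN : 0 ≤ N)
    (hDM : D ^ 2 ≤ α * M ^ 2) (hMN : M ^ 2 ≤ N ^ 2 / P + 2 * (N * D)) :
    D ≤ (√(α * (1 / P + α)) + α) * N := by
  have hsq : (D - α * N) ^ 2 ≤ (√(α * (1 / P + α)) * N) ^ 2 := by
    rw [mul_pow, Real.sq_sqrt (by positivity)]
    linear_combination hDM + α * hMN
  linarith [abs_le_of_sq_le_sq' hsq (by positivity)]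

lemma le_sqrt_mul_of_sq_le {β P N D M : ℝ} (hβ : 0 ≤ β) (hP : 0 < P) (hN : 0 ≤ N)
    (hD : D ≤ β * N) (hMN : M ^ 2 ≤ N ^ 2 / P + 2 * (N * D)) :
    M ≤ √(2 * β + 1 / P) * N := by
  refine le_of_sq_le_sq ?_ (by positivity)
  rw [mul_pow, Real.sq_sqrt (by positivity)]
  linear_combination hMN + 2 * N * hD

/-- The numbers `k` and `c` encode general self-adjoint boundary conditions: these make the boundary
form real and dominated by a multiple of `‖φ‖²_∞`. -/
theorem eigenfunction_norm_estimates_separated_general (hab : a < b)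
    (hp_pos : ∀ᵐ x ∂(volume.restrict (Set.Ioc a b)), 0 < p x)
    (hp_int : IntegrableOn (fun x => 1 / p x) (Set.Ioc a b))
    (hq_int : IntegrableOn q (Set.Ioc a b)) (hw_int : IntegrableOn w (Set.Ioc a b))
    (hlam : lam.im ≠ 0) (h : IsSturmLiouvilleSolution_s7 p q w lam a b φ u)
    {c k α β γ : ℝ} (hc : 0 ≤ c) (hk : boundaryForm φ u a b = k)
    (hkc : k ≤ c * sSup ((fun x => ‖φ x‖) '' Set.Icc a b) ^ 2)
    (hα : α = c + ∫ t in a..b, |min (q t) 0|)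
    (hβ : β = √(α * (1 / (∫ t in a..b, 1 / p t) + α)) + α)
    (hγ : γ = √(2 * β + 1 / (∫ t in a..b, 1 / p t))) :
    invWeightedNorm p a b u ≤ β * invWeightedNorm p a b φ ∧
      sSup ((fun x => ‖φ x‖) '' Set.Icc a b) ≤ γ * invWeightedNorm p a b φ := by
  rw [restrict_Ioc_eq_restrict_Icc] at hp_pos
  rw [← intervalIntegrable_iff_integrableOn_Ioc_of_le hab.le] at hp_int hq_int hw_int
  obtain ⟨x, hx, hmax⟩ := isCompact_Icc.exists_sSup_image_eq (Set.nonempty_Icc.2 hab.le)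
    h.continuousOn.norm
  have hφ := h.isPrimitiveOn hab.le hp_int
  have hu := (h.isPrimitiveOn_quasiDeriv hab.le hq_int hw_int).continuousOn
  have energy := h.invWeightedNorm_quasiDeriv_sq_le hab.le hp_pos hp_int hq_int hw_int hlam hk hkc
  have interpolation := hφ.norm_sq_le_invWeightedNorm hab hp_pos hp_int hu hx
  rw [← hα, hmax] at energy
  have hP := integral_one_div_pos hab hp_pos hp_int
  have hα_nonneg : 0 ≤ α :=
    hα ▸ add_nonneg hc (intervalIntegral.integral_nonneg hab.le fun _ _ => abs_nonneg _)
  have hβ_nonneg : 0 ≤ β := hβ ▸ by positivity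
  have quasiDeriv_le : invWeightedNorm p a b u ≤ β * invWeightedNorm p a b φ :=
    hβ ▸ le_mul_of_sq_le_mul_sq hα_nonneg hP (Real.sqrt_nonneg _) energy interpolation
  rw [hmax, hγ]
  exact ⟨quasiDeriv_le,
    le_sqrt_mul_of_sq_le hβ_nonneg hP (Real.sqrt_nonneg _) quasiDeriv_le interpolation⟩

end SturmLiouville

/-- Lemma 3.1 of the paper for separated self-adjoint boundary conditions:
for a non-real eigenvalue λ and a corresponding solution (φ, u),
‖φ'‖_{p,2} ≤ β·‖φ‖_{1/p,2} and ‖φ‖_∞ ≤ γ·‖φ‖_{1/p,2}, where the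
constants are built from c = |l| + |r|. -/
theorem eigenfunction_norm_estimates_separated
    (a b : ℝ) (hab : a < b) (p q w : ℝ → ℝ)
    (hpm : Measurable p) (hqm : Measurable q) (hwm : Measurable w)
    (hp_pos : ∀ᵐ x ∂(volume.restrict (Set.Ioc a b)), 0 < p x)
    (hp_int : IntegrableOn (fun x => 1 / p x) (Set.Ioc a b))
    (hq_int : IntegrableOn q (Set.Ioc a b))
    (hw_int : IntegrableOn w (Set.Ioc a b))
    (hw_ne : ∀ᵐ x ∂(volume.restrict (Set.Ioc a b)), w x ≠ 0)
    (lam : ℂ) (hlam : lam.im ≠ 0) (φ u : ℝ → ℂ)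
    (hφc : ContinuousOn φ (Set.Icc a b)) (huc : ContinuousOn u (Set.Icc a b))
    (hφ : ∀ x ∈ Set.Icc a b, φ x = φ a + ∫ t in a..x, u t / (p t : ℂ))
    (hu : ∀ x ∈ Set.Icc a b, u x = u a + ∫ t in a..x, ((q t : ℂ) - lam * (w t : ℂ)) * φ t)
    (l r : ℝ) (hbca : u a = (l : ℂ) * φ a) (hbcb : u b = (r : ℂ) * φ b)
    (c α β γ : ℝ)
    (hc : c = |l| + |r|)
    (hα : α = c + ∫ t in a..b, |min (q t) 0|)
    (hβ : β = Real.sqrt (α * (1 / (∫ t in a..b, 1 / p t) + α)) + α)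
    (hγ : γ = Real.sqrt (2 * β + 1 / (∫ t in a..b, 1 / p t))) :
    Real.sqrt (∫ t in a..b, ‖u t‖ ^ 2 / p t)
        ≤ β * Real.sqrt (∫ t in a..b, ‖φ t‖ ^ 2 / p t)
      ∧ sSup ((fun x => ‖φ x‖) '' Set.Icc a b)
        ≤ γ * Real.sqrt (∫ t in a..b, ‖φ t‖ ^ 2 / p t) := by
  exact eigenfunction_norm_estimates_separated_general hab hp_pos hp_int hq_int hw_int hlam
    ⟨hφc, huc, hφ, hu⟩ (hc ▸ by positivity) (boundaryForm_eq_of_separated hbca hbcb)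
    (hc ▸ mul_norm_sq_sub_mul_norm_sq_le hab.le hφc l r) hα hβ hγ
end
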